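/- Under the standing hypotheses, the striction curve satisfies σ'(s) = τ₁(s)·v₀(s) + κ₁(s)·t₀(s) for all s ∈ I. -/

import Mathlib

noncomputable section
open scoped RealInnerProductSpace

/-- Euclidean 3-space `ℝ³`. -/
abbrev E3 : Type := EuclideanSpace ℝ (Fin 3)

/-- The cross product on `E3`. -/
def cross (u v : E3) : E3 :=
  (WithLp.equiv 2 (Fin 3 → ℝ)).symm
    ![u 1 * v 2 - u 2 * v 1, u 2 * v 0 - u 0 * v 2, u 0 * v 1 - u 1 * v 0]

/-- Determinant of the 3×3 matrix with columns `u`, `v`, `w`. -/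
def det3 (u v w : E3) : ℝ :=
  Matrix.det !![u 0, v 0, w 0; u 1, v 1, w 1; u 2, v 2, w 2]

namespace Ruled

/-- The director curve `e = v₀`. -/
def e (v₀ : ℝ → E3) : ℝ → E3 := v₀

/-- The base curve `r = v₀ × v₁`. -/
def r (v₀ v₁ : ℝ → E3) : ℝ → E3 := fun s => cross (v₀ s) (v₁ s)

/-- The parametrization `F(s,t) = r(s) + t • e(s)` of the ruled surface. -/
def F (v₀ v₁ : ℝ → E3) (s t : ℝ) : E3 := r v₀ v₁ s + t • v₀ s

/-- `n₀ = v₀'`. -/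
def n₀ (v₀ : ℝ → E3) : ℝ → E3 := fun s => deriv v₀ s

/-- `κ₁ = ⟪v₀', v₁'⟫`, the ε-part of the dual curvature. -/
def κ₁ (v₀ v₁ : ℝ → E3) : ℝ → ℝ := fun s => ⟪deriv v₀ s, deriv v₁ s⟫

/-- `n₁ = v₁' - κ₁ • v₀'`. -/
def n₁ (v₀ v₁ : ℝ → E3) : ℝ → E3 := fun s => deriv v₁ s - κ₁ v₀ v₁ s • deriv v₀ s

/-- `t₀ = v₀ × n₀`. -/
def t₀ (v₀ : ℝ → E3) : ℝ → E3 := fun s => cross (v₀ s) (n₀ v₀ s)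

/-- `t₁ = v₀ × n₁ + v₁ × n₀`. -/
def t₁ (v₀ v₁ : ℝ → E3) : ℝ → E3 :=
  fun s => cross (v₀ s) (n₁ v₀ v₁ s) + cross (v₁ s) (n₀ v₀ s)

/-- `τ₀ = ⟪n₀', t₀⟫`, the real part of the dual torsion. -/
def τ₀ (v₀ : ℝ → E3) : ℝ → ℝ := fun s => ⟪deriv (n₀ v₀) s, t₀ v₀ s⟫

/-- `τ₁ = ⟪n₀', t₁⟫ + ⟪n₁', t₀⟫`, the ε-part of the dual torsion. -/
def τ₁ (v₀ v₁ : ℝ → E3) : ℝ → ℝ :=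
  fun s => ⟪deriv (n₀ v₀) s, t₁ v₀ v₁ s⟫ + ⟪deriv (n₁ v₀ v₁) s, t₀ v₀ s⟫

/-- The striction curve `σ(s) = r(s) - ⟪r'(s), e'(s)⟫ • e(s)`. -/
def strict (v₀ v₁ : ℝ → E3) : ℝ → E3 :=
  fun s => r v₀ v₁ s - ⟪deriv (r v₀ v₁) s, deriv (e v₀) s⟫ • e v₀ s

end Ruled

open Ruled

lemma cross_hasDerivAt {u v : ℝ → E3} {u' v' : E3} {s : ℝ} (hu : HasDerivAt u u' s)
    (hv : HasDerivAt v v' s) :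
    HasDerivAt (fun x => cross (u x) (v x)) (cross u' (v s) + cross (u s) v') s := by
  have hu2 : ∀ i, HasDerivAt (fun x => u x i) (u' i) s := fun i => 
    (EuclideanSpace.proj (𝕜 := ℝ) i : E3 →L[ℝ] ℝ).hasFDerivAt.comp_hasDerivAt s hu
  have hv2 : ∀ i, HasDerivAt (fun x => v x i) (v' i) s := fun i => 
    (EuclideanSpace.proj (𝕜 := ℝ) i : E3 →L[ℝ] ℝ).hasFDerivAt.comp_hasDerivAt s hv
  have key : HasDerivAt (fun x => (cross (u x) (v x)).ofLp)
      (cross u' (v s) + cross (u s) v').ofLp s := by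
    rw [hasDerivAt_pi]
    intro i
    fin_cases i
    · refine (((hu2 1).mul (hv2 2)).sub ((hu2 2).mul (hv2 1))).congr_deriv ?_
      simp [cross]; ring
    · refine (((hu2 2).mul (hv2 0)).sub ((hu2 0).mul (hv2 2))).congr_deriv ?_
      simp [cross]; ring
    · refine (((hu2 0).mul (hv2 1)).sub ((hu2 1).mul (hv2 0))).congr_deriv ?_
      simp [cross]; ring
  exact (PiLp.hasFDerivAt_toLp (𝕜 := ℝ) 2 _).comp_hasDerivAt s key

lemma inner3 (u v : E3) : ⟪u, v⟫ = u 0 * v 0 + u 1 * v 1 + u 2 * v 2 := by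
  simp [PiLp.inner_apply, Fin.sum_univ_three]; ring

@[simp] lemma cross0 (u v : E3) : cross u v 0 = u 1 * v 2 - u 2 * v 1 := rfl
@[simp] lemma cross1 (u v : E3) : cross u v 1 = u 2 * v 0 - u 0 * v 2 := rfl
@[simp] lemma cross2 (u v : E3) : cross u v 2 = u 0 * v 1 - u 1 * v 0 := rfl

lemma frame_expand (a n x : E3) (haa : ⟪a, a⟫ = 1) (hnn : ⟪n, n⟫ = 1) (han : ⟪a, n⟫ = 0) :
    x = ⟪x, a⟫ • a + ⟪x, n⟫ • n + ⟪x, cross a n⟫ • cross a n := by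
  have hon : Orthonormal ℝ ![a, n, cross a n] := by
    rw [inner3] at haa hnn han
    have htt : ⟪cross a n, cross a n⟫ = 1 := by
      rw [inner3]; simp only [cross0, cross1, cross2]
      linear_combination (n 0 * n 0 + n 1 * n 1 + n 2 * n 2) * haa + hnn
        - (a 0 * n 0 + a 1 * n 1 + a 2 * n 2) * han
    rw [inner3] at htt
    rw [orthonormal_iff_ite]
    intro i j
    fin_cases i <;> fin_cases j <;> simp [-inner_self_eq_norm_sq_to_K, inner3] <;>
      simp only [cross0, cross1, cross2] at htt <;> first | linear_combination haa | linear_combination hnn | linear_combination han | linear_combination htt | ring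
  let B := basisOfOrthonormalOfCardEqFinrank hon (by simp)
  have hB : ⇑B = ![a, n, cross a n] := coe_basisOfOrthonormalOfCardEqFinrank hon (by simp)
  let O := B.toOrthonormalBasis (by rw [hB]; exact hon)
  have hO : ⇑O = ![a, n, cross a n] := by simp [O, hB]
  have h := O.sum_repr' x
  rw [Fin.sum_univ_three, hO] at h
  simp only [Matrix.cons_val_zero, Matrix.cons_val_one, Matrix.cons_val] at h
  rw [real_inner_comm a x, real_inner_comm n x, real_inner_comm (cross a n) x] 
  exact h.symm

lemma frame_ext (a n x y : E3) (haa : ⟪a, a⟫ = 1) (hnn : ⟪n, n⟫ = 1) (han : ⟪a, n⟫ = 0)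
    (h1 : ⟪x, a⟫ = ⟪y, a⟫) (h2 : ⟪x, n⟫ = ⟪y, n⟫) (h3 : ⟪x, cross a n⟫ = ⟪y, cross a n⟫) :
    x = y := by
  rw [frame_expand a n x haa hnn han, frame_expand a n y haa hnn han, h1, h2, h3]

lemma alg (a n m b b' b'' : E3) (haa : ⟪a, a⟫ = 1) (hnn : ⟪n, n⟫ = 1) (han : ⟪a, n⟫ = 0)
    (hnm : ⟪m, n⟫ = 0) (ham : ⟪m, a⟫ = -1) (hab : ⟪a, b⟫ = 0) (k' : ℝ) :
    (cross n b + cross a b') -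
      (⟪cross n b + cross a b', n⟫ • n +
       (⟪cross n b + cross a b', m⟫ + ⟪(cross m b + cross n b') + (cross n b' + cross a b''), n⟫) • a)
    = (⟪m, cross a (b' - ⟪n, b'⟫ • n) + cross b n⟫
        + ⟪b'' - (⟪n, b'⟫ • m + k' • n), cross a n⟫) • a + ⟪n, b'⟫ • cross a n := by
  have hm := frame_expand a n m haa hnn han
  rw [hnm, ham] at hm
  have S : ⟪cross n b, a⟫ - (⟪cross n b + cross a b', m⟫
      + ⟪(cross m b + cross n b') + (cross n b' + cross a b''), n⟫) =
      (⟪m, cross a (b' - ⟪n, b'⟫ • n) + cross b n⟫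
        + ⟪b'' - (⟪n, b'⟫ • m + k' • n), cross a n⟫) := by
    clear hnm ham
    generalize ⟪m, cross a n⟫ = τ at hm
    subst hm
    have e1 := inner3 n b'
    have e2 := inner3 a b'
    have e3 := inner3 n b
    generalize ⟪n, b'⟫ = κ at *
    generalize ⟪a, b'⟫ = ab' at *
    generalize ⟪n, b⟫ = nb at *
    rw [inner3] at haa hnn han hab
    simp only [inner3, cross0, cross1, cross2, PiLp.add_apply, PiLp.sub_apply, PiLp.smul_apply,
      smul_eq_mul]
    subst e1 e2 e3
    linear_combination 2 * τ * (n 0 * b' 0 + n 1 * b' 1 + n 2 * b' 2) * (a 0 * a 0 + a 1 * a 1 + a 2 * a 2) * hnn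
      + (2 * τ * (a 0 * b' 0 + a 1 * b' 1 + a 2 * b' 2)
        - 2 * τ * (n 0 * b' 0 + n 1 * b' 1 + n 2 * b' 2) * (a 0 * n 0 + a 1 * n 1 + a 2 * n 2)
        + τ * (n 0 * b 0 + n 1 * b 1 + n 2 * b 2)) * han
      - τ * (n 0 * n 0 + n 1 * n 1 + n 2 * n 2) * hab
  rw [← S]
  generalize (⟪cross n b + cross a b', m⟫
      + ⟪(cross m b + cross n b') + (cross n b' + cross a b''), n⟫) = q
  have t1 : ⟪cross a n, a⟫ = 0 := by rw [inner3]; simp only [cross0, cross1, cross2]; ring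
  have t1' : ⟪a, cross a n⟫ = 0 := by rw [real_inner_comm, t1]
  have t2 : ⟪cross a n, n⟫ = 0 := by rw [inner3]; simp only [cross0, cross1, cross2]; ring
  have t2' : ⟪n, cross a n⟫ = 0 := by rw [real_inner_comm, t2]
  have t3 : ⟪cross a b', a⟫ = 0 := by rw [inner3]; simp only [cross0, cross1, cross2]; ring
  have han' : ⟪n, a⟫ = 0 := by rw [real_inner_comm, han]
  have L : ∀ a b c d : E3, ⟪cross a b, cross c d⟫ = ⟪a, c⟫ * ⟪b, d⟫ - ⟪a, d⟫ * ⟪b, c⟫ := by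
    intro a b c d
    simp only [inner3, cross0, cross1, cross2]; ring
  apply frame_ext a n _ _ haa hnn han
  · simp only [inner_add_left, inner_sub_left, real_inner_smul_left, haa, han', t1, t3]
    ring
  · simp only [inner_add_left, inner_sub_left, real_inner_smul_left, hnn, han, t2]
    ring
  · simp only [inner_add_left, inner_sub_left, real_inner_smul_left, t1', t2', L, haa, hnn, han,
      han', real_inner_comm a b, hab, real_inner_comm n b']
    ring

/-- The derivative of the striction curve is `σ' = τ₁ • v₀ + κ₁ • t₀`. -/
theorem striction_curve_deriv
    (I : Set ℝ) (v₀ v₁ : ℝ → E3)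
    (hI : IsOpen I) (hI' : I.OrdConnected)
    (hv₀ : ContDiffOn ℝ (⊤ : ℕ∞) v₀ I) (hv₁ : ContDiffOn ℝ (⊤ : ℕ∞) v₁ I)
    (hunit : ∀ s ∈ I, ‖v₀ s‖ = 1) (horth : ∀ s ∈ I, ⟪v₀ s, v₁ s⟫ = 0)
    (harc : ∀ s ∈ I, ‖deriv v₀ s‖ = 1) :
    ∀ s ∈ I, deriv (strict v₀ v₁) s = τ₁ v₀ v₁ s • v₀ s + κ₁ v₀ v₁ s • t₀ v₀ s := by
  have D : ∀ f : ℝ → E3, ContDiffOn ℝ (⊤ : ℕ∞) f I →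
      ∀ s ∈ I, HasDerivAt f (deriv f s) s := fun f hf s hs =>
    ((hf.differentiableOn (by simp)).differentiableAt (hI.mem_nhds hs)).hasDerivAt
  have A1 := D _ hv₀
  have B1 := D _ hv₁
  have A2 := D _ (hv₀.deriv_of_isOpen (m := (⊤ : ℕ∞)) hI (by simp))
  have B2 := D _ (hv₁.deriv_of_isOpen (m := (⊤ : ℕ∞)) hI (by simp))
  have haa : ∀ s ∈ I, ⟪v₀ s, v₀ s⟫ = 1 := fun s hs => by simp [hunit s hs]
  have hnn : ∀ s ∈ I, ⟪deriv v₀ s, deriv v₀ s⟫ = 1 := fun s hs => by simp [harc s hs]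
  have C : ∀ (f : ℝ → ℝ) (f' c : ℝ), (∀ s ∈ I, f s = c) → ∀ s ∈ I, HasDerivAt f f' s → f' = 0 := by
    intro f f' c h s hs hf
    have : f =ᶠ[nhds s] fun _ => c := Filter.eventually_of_mem (hI.mem_nhds hs) h
    exact (hf.congr_of_eventuallyEq this.symm).unique (hasDerivAt_const s c)
  have han : ∀ s ∈ I, ⟪v₀ s, deriv v₀ s⟫ = 0 := fun s hs => by
    have := C _ _ 1 haa s hs ((A1 s hs).inner ℝ (A1 s hs))
    rw [real_inner_comm (v₀ s) (deriv v₀ s)] at this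
    linarith [real_inner_comm (v₀ s) (deriv v₀ s)]
  intro s hs
  have hnm : ⟪deriv (deriv v₀) s, deriv v₀ s⟫ = 0 := by
    have := C _ _ 1 hnn s hs ((A2 s hs).inner ℝ (A2 s hs))
    linarith [real_inner_comm (deriv (deriv v₀) s) (deriv v₀ s)]
  have ham : ⟪deriv (deriv v₀) s, v₀ s⟫ = -1 := by
    have := C _ _ 0 han s hs ((A1 s hs).inner ℝ (A2 s hs))
    linarith [real_inner_comm (deriv (deriv v₀) s) (v₀ s), hnn s hs]
  have hr : ∀ s ∈ I, HasDerivAt (r v₀ v₁)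
      (cross (deriv v₀ s) (v₁ s) + cross (v₀ s) (deriv v₁ s)) s := fun s hs =>
    cross_hasDerivAt (A1 s hs) (B1 s hs)
  have hr2 : HasDerivAt (fun s => deriv (r v₀ v₁) s) _ s :=
    ((cross_hasDerivAt (A2 s hs) (B1 s hs)).add
      (cross_hasDerivAt (A1 s hs) (B2 s hs))).congr_of_eventuallyEq
      (Filter.eventually_of_mem (hI.mem_nhds hs) fun x hx => (hr x hx).deriv)
  have hS : HasDerivAt (strict v₀ v₁) _ s :=
    (hr s hs).sub ((hr2.inner ℝ (A2 s hs)).smul (A1 s hs))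
  have hn1 : HasDerivAt (n₁ v₀ v₁) _ s :=
    (B2 s hs).sub (((A2 s hs).inner ℝ (B2 s hs)).smul (A2 s hs))
  rw [hS.deriv]
  simp only [τ₁, hn1.deriv, κ₁, t₀, t₁, n₀, (hr s hs).deriv]
  exact alg _ _ _ _ _ _ (haa s hs) (hnn s hs) (han s hs) hnm ham (horth s hs) _
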